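/- arXiv:1811.01246 — 2 statements merged into one kernel-verified Lean document; each statement's English description precedes it below -/
import Mathlib

section
/- Let α > −1 and −1/2 < α + β < 1/2, and let θ > 0 satisfy 1/(1+θ) < α + β + 1/2. There is a constant C = C(α,β,θ) such that for every measurable f ≥ 0 on (0,∞) and every x > 0: Ψ^{α,β}_{*,E} f(x) ≤ C ( x^β [D((z ↦ z^{−β} f(z))^{1+θ})(x)]^{1/(1+θ)} + x^β [R((z ↦ z^{−β} f(z))^{1+θ})(x)]^{1/(1+θ)} ). -/
open MeasureTheory Set Filter
open scoped ENNReal NNReal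

noncomputable def PsiE (a b t x z : ℝ) : ℝ :=
  if |x - z| < t ∧ t < x + z then
    (x * z) ^ (-(2*a) - b) * t ^ (-(2*a) - 2*b) *
      ((t ^ 2 - (x - z) ^ 2) * ((x + z) ^ 2 - t ^ 2)) ^ (a + b - 1/2)
  else 0

noncomputable def PsiStarE (a b : ℝ) (f : ℝ → ℝ) (x : ℝ) : ℝ≥0∞ :=
  ⨆ t ∈ Set.Ioi (0 : ℝ),
    ∫⁻ z in Set.Ioi (0 : ℝ), ENNReal.ofReal (PsiE a b t x z * f z * z ^ (2 * a + 1))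

noncomputable def Dop (f : ℝ → ℝ) (x : ℝ) : ℝ≥0∞ :=
  ⨆ (A : ℝ) (B : ℝ) (_ : 0 ≤ A) (_ : A < x) (_ : x < B),
    (ENNReal.ofReal (B ^ 2 - A ^ 2))⁻¹ * ∫⁻ z in Set.Ioo A B, ENNReal.ofReal (z * |f z|)

noncomputable def Rop (f : ℝ → ℝ) (x : ℝ) : ℝ≥0∞ :=
  ⨆ t ∈ Set.Ioi (2 * x),
    (ENNReal.ofReal (2 * x))⁻¹ * ∫⁻ z in Set.Icc (t - x) (t + x), ENNReal.ofReal |f z|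

/-!
Let `A = |x - t|` and `B = x + t`, so that `B ^ 2 - A ^ 2 = 4 * x * t`. In the variable
`σ = (z ^ 2 - A ^ 2) / (B ^ 2 - A ^ 2)` the kernel becomes, up to the factor `x ^ b * z ^ (-b)`,
the weight `(σ * (1 - σ)) ^ (a + b - 1/2)` against the probability measure
`2 * z / (B ^ 2 - A ^ 2) dz` on `(A, B)`, which is carried to Lebesgue measure on `(0, 1)` by
`z ↦ σ`. Hölder's inequality with exponent `p = 1 + θ` bounds the integral by a Beta integral,
finite because `1 / p < a + b + 1/2`, times the `L^p` mean of `z ^ (-b) * f z` on `(A, B)`. That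
mean is controlled by `Dop` when `t ≤ 2 * x`: directly if `(A, B)` surrounds `x`, and otherwise
after enlarging the interval to `(0, B)`. It is controlled by `Rop` when `2 * x < t`, since the
density is then comparable to `1 / (2 * x)`.
-/

theorem lintegral_rpow_mul_one_sub_rpow {u v : ℝ} (hu : 0 < u) (hv : 0 < v) :
    ∫⁻ s in Ioo (0 : ℝ) 1, ENNReal.ofReal (s ^ (u - 1) * (1 - s) ^ (v - 1)) =
      ENNReal.ofReal (ProbabilityTheory.beta u v) := by
  have beta_pos := ProbabilityTheory.beta_pos hu hv
  have integral_pdf := ProbabilityTheory.lintegral_betaPDF_eq_one hu hv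
  simp only [ProbabilityTheory.lintegral_betaPDF, mul_assoc] at integral_pdf
  rw [← mul_one (ENNReal.ofReal _), ← integral_pdf,
    ← lintegral_const_mul' _ _ ENNReal.ofReal_ne_top]
  refine lintegral_congr fun s => ?_
  rw [← ENNReal.ofReal_mul beta_pos.le, ← mul_assoc, mul_one_div_cancel beta_pos.ne', one_mul]

section SquareRatio

variable {A B z : ℝ}

/-- The increasing affine function of `z ^ 2` which is `0` at `z = A` and `1` at `z = B`. -/
noncomputable def sqRatio (A B z : ℝ) : ℝ := (z ^ 2 - A ^ 2) / (B ^ 2 - A ^ 2)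

@[fun_prop]
theorem continuous_sqRatio (A B : ℝ) : Continuous (sqRatio A B) := by
  unfold sqRatio
  fun_prop

theorem hasDerivAt_sqRatio (A B z : ℝ) :
    HasDerivAt (sqRatio A B) (2 * z / (B ^ 2 - A ^ 2)) z :=
  HasDerivAt.congr_deriv (((hasDerivAt_pow 2 z).sub_const (A ^ 2)).div_const (B ^ 2 - A ^ 2))
    (by simp)

theorem strictMonoOn_sqRatio (hA : 0 ≤ A) (hAB : A < B) : StrictMonoOn (sqRatio A B) (Ici 0) :=
  fun _ hy _ _ hyz => div_lt_div_of_pos_right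
    (sub_lt_sub_right (pow_lt_pow_left₀ hyz hy two_ne_zero) _) (sub_pos.2 (by gcongr))

theorem image_sqRatio_Ioo (hA : 0 ≤ A) (hAB : A < B) : sqRatio A B '' Ioo A B = Ioo 0 1 := by
  have hL : 0 < B ^ 2 - A ^ 2 := sub_pos.2 (by gcongr)
  rw [(continuous_sqRatio A B).continuousOn.image_Ioo_of_strictMonoOn hAB.le
    ((strictMonoOn_sqRatio hA hAB).mono fun _ hz => hA.trans hz.1)]
  simp [sqRatio, hL.ne']

theorem sqRatio_mem_Ioo (hA : 0 ≤ A) (hz : z ∈ Ioo A B) : sqRatio A B z ∈ Ioo (0 : ℝ) 1 :=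
  image_sqRatio_Ioo hA (hz.1.trans hz.2) ▸ mem_image_of_mem _ hz

/-- The probability measure with density `2 * z / (B ^ 2 - A ^ 2)` on `(A, B)`: the law of the
distance to the origin of a uniformly distributed point of the plane annulus with radii
`0 ≤ A < B`. -/
noncomputable def annulusMeasure (A B : ℝ) : Measure ℝ :=
  (volume.restrict (Ioo A B)).withDensity fun z => ENNReal.ofReal (2 * z / (B ^ 2 - A ^ 2))

theorem lintegral_annulusMeasure (A B : ℝ) (F : ℝ → ℝ≥0∞) :
    ∫⁻ z, F z ∂annulusMeasure A B =
      ∫⁻ z in Ioo A B, ENNReal.ofReal (2 * z / (B ^ 2 - A ^ 2)) * F z :=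
  lintegral_withDensity_eq_lintegral_mul_non_measurable _ (by fun_prop)
    (ae_of_all _ fun _ => ENNReal.ofReal_lt_top) F

theorem lintegral_annulusMeasure_congr {F G : ℝ → ℝ≥0∞} (h : EqOn F G (Ioo A B)) :
    ∫⁻ z, F z ∂annulusMeasure A B = ∫⁻ z, G z ∂annulusMeasure A B := by
  rw [lintegral_annulusMeasure, lintegral_annulusMeasure]
  exact setLIntegral_congr_fun measurableSet_Ioo fun z hz => congrArg _ (h hz)

theorem lintegral_comp_sqRatio_annulusMeasure (hA : 0 ≤ A) (hAB : A < B) (F : ℝ → ℝ≥0∞) :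
    ∫⁻ z, F (sqRatio A B z) ∂annulusMeasure A B = ∫⁻ s in Ioo (0 : ℝ) 1, F s := by
  have hL : 0 ≤ B ^ 2 - A ^ 2 := sub_nonneg.2 (by gcongr)
  rw [lintegral_annulusMeasure, ← image_sqRatio_Ioo hA hAB,
    lintegral_image_eq_lintegral_abs_deriv_mul measurableSet_Ioo
      (fun z _ => (hasDerivAt_sqRatio A B z).hasDerivWithinAt)
      ((strictMonoOn_sqRatio hA hAB).injOn.mono fun z hz => hA.trans hz.1.le)]
  refine setLIntegral_congr_fun measurableSet_Ioo fun z hz => ?_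
  have hz0 : 0 ≤ z := hA.trans hz.1.le
  simp only [abs_of_nonneg (show 0 ≤ 2 * z / (B ^ 2 - A ^ 2) by positivity)]

theorem lintegral_mul_sqRatio_rpow_le (hA : 0 ≤ A) (hAB : A < B) {p q c d : ℝ}
    (hpq : p.HolderConjugate q) (hc : -1 < c * q) (hd : -1 < d * q) {G : ℝ → ℝ≥0∞}
    (hG : AEMeasurable G (annulusMeasure A B)) :
    ∫⁻ z, G z * ENNReal.ofReal (sqRatio A B z ^ c * (1 - sqRatio A B z) ^ d)
        ∂annulusMeasure A B ≤
      (∫⁻ z, G z ^ p ∂annulusMeasure A B) ^ (1 / p) *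
        ENNReal.ofReal (ProbabilityTheory.beta (c * q + 1) (d * q + 1)) ^ (1 / q) := by
  refine (ENNReal.lintegral_mul_le_Lp_mul_Lq _ hpq hG (by fun_prop)).trans_eq ?_
  rw [lintegral_comp_sqRatio_annulusMeasure hA hAB
      fun s => ENNReal.ofReal (s ^ c * (1 - s) ^ d) ^ q,
    ← lintegral_rpow_mul_one_sub_rpow (neg_lt_iff_pos_add.1 hc) (neg_lt_iff_pos_add.1 hd)]
  congr 2
  refine setLIntegral_congr_fun measurableSet_Ioo fun s ⟨hs0, hs1⟩ => ?_
  have hs1' : 0 ≤ 1 - s := sub_nonneg.2 hs1.le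
  simp only [add_sub_cancel_right]
  rw [ENNReal.ofReal_rpow_of_nonneg (by positivity) hpq.symm.nonneg,
    Real.mul_rpow (by positivity) (by positivity), ← Real.rpow_mul hs0.le, ← Real.rpow_mul hs1']

theorem lintegral_annulusMeasure_le_mul {A' c : ℝ} (hA' : 0 ≤ A') (hA : A' ≤ A) (hAB : A < B)
    (hc : B ^ 2 - A' ^ 2 ≤ c * (B ^ 2 - A ^ 2)) (F : ℝ → ℝ≥0∞) :
    ∫⁻ z, F z ∂annulusMeasure A B ≤ ENNReal.ofReal c * ∫⁻ z, F z ∂annulusMeasure A' B := by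
  have hA0 : 0 ≤ A := hA'.trans hA
  have hAB' : A' < B := hA.trans_lt hAB
  have hL : 0 < B ^ 2 - A ^ 2 := sub_pos.2 (by gcongr)
  have hL' : 0 < B ^ 2 - A' ^ 2 := sub_pos.2 (by gcongr)
  have hc0 : 0 ≤ c := (pos_of_mul_pos_left (hL'.trans_le hc) hL.le).le
  rw [lintegral_annulusMeasure, lintegral_annulusMeasure,
    ← lintegral_const_mul' _ _ ENNReal.ofReal_ne_top]
  refine (lintegral_mono_set (Ioo_subset_Ioo_left hA)).trans
    (setLIntegral_mono' measurableSet_Ioo fun z hz => ?_)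
  have hz0 : 0 < z := hA'.trans_lt hz.1
  rw [← mul_assoc, ← ENNReal.ofReal_mul hc0]
  gcongr
  rw [mul_div_assoc', div_le_div_iff₀ hL hL']
  nlinarith

end SquareRatio

section SpecialOperators

variable {x t : ℝ}

theorem lintegral_annulusMeasure_le_Dop {A B : ℝ} (hA : 0 ≤ A) (hAx : A < x) (hxB : x < B)
    (g : ℝ → ℝ) :
    ∫⁻ z, ENNReal.ofReal |g z| ∂annulusMeasure A B ≤ 2 * Dop g x := by
  have hAB : A < B := hAx.trans hxB
  have hL : 0 < B ^ 2 - A ^ 2 := sub_pos.2 (by gcongr)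
  have mean_le : (ENNReal.ofReal (B ^ 2 - A ^ 2))⁻¹ *
      ∫⁻ z in Ioo A B, ENNReal.ofReal (z * |g z|) ≤ Dop g x :=
    le_iSup₂_of_le A B <| le_iSup₂_of_le hA hAx <| le_iSup_of_le hxB le_rfl
  refine le_trans (le_of_eq ?_) (mul_le_mul_right mean_le 2)
  rw [← mul_assoc, ← ENNReal.ofReal_inv_of_pos hL, ← ENNReal.ofReal_ofNat 2,
    ← ENNReal.ofReal_mul (by norm_num), ← lintegral_const_mul' _ _ ENNReal.ofReal_ne_top,
    lintegral_annulusMeasure]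
  refine setLIntegral_congr_fun measurableSet_Ioo fun z hz => ?_
  have hz0 : 0 < z := hA.trans_lt hz.1
  simp only [← ENNReal.ofReal_mul (show 0 ≤ 2 * z / (B ^ 2 - A ^ 2) by positivity),
    ← ENNReal.ofReal_mul (show 0 ≤ 2 * (B ^ 2 - A ^ 2)⁻¹ by positivity)]
  ring_nf

theorem sq_add_sub_sq_abs_sub (x t : ℝ) : (x + t) ^ 2 - |x - t| ^ 2 = 4 * x * t := by
  rw [sq_abs]
  ring

theorem lintegral_annulusMeasure_abs_sub_add_le_Dop (hx : 0 < x) (ht : 0 < t) (htx : t ≤ 2 * x)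
    (g : ℝ → ℝ) :
    ∫⁻ z, ENNReal.ofReal |g z| ∂annulusMeasure |x - t| (x + t) ≤ 3 * Dop g x := by
  rcases lt_or_ge t x with h | h
  · have surrounds : |x - t| < x := by rw [abs_of_pos (sub_pos.2 h)]; linarith
    refine (lintegral_annulusMeasure_le_Dop (abs_nonneg _) surrounds (by linarith) g).trans ?_
    gcongr
    norm_num
  · have enlarge : (x + t) ^ 2 - 0 ^ 2 ≤ 3 / 2 * ((x + t) ^ 2 - |x - t| ^ 2) := by
      rw [sq_add_sub_sq_abs_sub]
      nlinarith [mul_nonneg (sub_nonneg.2 h) (sub_nonneg.2 htx), mul_pos hx ht]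
    have hAB : |x - t| < x + t := abs_lt.2 ⟨by linarith, by linarith⟩
    calc ∫⁻ z, ENNReal.ofReal |g z| ∂annulusMeasure |x - t| (x + t)
        ≤ ENNReal.ofReal (3 / 2) * ∫⁻ z, ENNReal.ofReal |g z| ∂annulusMeasure 0 (x + t) :=
          lintegral_annulusMeasure_le_mul le_rfl (abs_nonneg _) hAB enlarge _
      _ ≤ ENNReal.ofReal (3 / 2) * (2 * Dop g x) := by
          gcongr
          exact lintegral_annulusMeasure_le_Dop le_rfl hx (by linarith) g
      _ = 3 * Dop g x := by
          rw [← mul_assoc, ← ENNReal.ofReal_ofNat 2, ← ENNReal.ofReal_mul (by norm_num)]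
          norm_num

theorem lintegral_annulusMeasure_abs_sub_add_le_Rop (hx : 0 < x) (htx : 2 * x < t)
    (g : ℝ → ℝ) :
    ∫⁻ z, ENNReal.ofReal |g z| ∂annulusMeasure |x - t| (x + t) ≤ 3 * Rop g x := by
  have ht : 0 < t := by linarith
  have mean_le : (ENNReal.ofReal (2 * x))⁻¹ *
      ∫⁻ z in Icc (t - x) (t + x), ENNReal.ofReal |g z| ≤ Rop g x :=
    le_iSup₂_of_le t htx le_rfl
  refine le_trans ?_ (mul_le_mul_right mean_le 3)
  rw [← mul_assoc, ← ENNReal.ofReal_inv_of_pos (by positivity), ← ENNReal.ofReal_ofNat 3,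
    ← ENNReal.ofReal_mul (by norm_num), ← lintegral_const_mul' _ _ ENNReal.ofReal_ne_top,
    lintegral_annulusMeasure, sq_add_sub_sq_abs_sub, abs_sub_comm,
    abs_of_pos (by linarith), add_comm x t]
  refine (lintegral_mono_set Ioo_subset_Icc_self).trans
    (setLIntegral_mono' measurableSet_Icc fun z hz => ?_)
  gcongr
  rw [← div_eq_mul_inv, div_le_div_iff₀ (by positivity) (by positivity)]
  nlinarith [mul_pos hx ht, mul_pos hx (sub_pos.2 htx), mul_nonneg hx.le (sub_nonneg.2 hz.2)]

theorem lintegral_annulusMeasure_abs_sub_add_le_Dop_add_Rop (hx : 0 < x) (ht : 0 < t) (g : ℝ → ℝ) :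
    ∫⁻ z, ENNReal.ofReal |g z| ∂annulusMeasure |x - t| (x + t) ≤ 3 * (Dop g x + Rop g x) := by
  rcases le_or_gt t (2 * x) with htx | htx
  · grw [lintegral_annulusMeasure_abs_sub_add_le_Dop hx ht htx g, ← le_self_add]
  · grw [lintegral_annulusMeasure_abs_sub_add_le_Rop hx htx g, ← le_add_self]

end SpecialOperators

section Kernel

variable {a b t x z : ℝ}

theorem abs_sub_lt_and_lt_add_iff : |x - z| < t ∧ t < x + z ↔ z ∈ Ioo |x - t| (x + t) := by
  grind

theorem PsiE_of_notMem (hz : z ∉ Ioo |x - t| (x + t)) : PsiE a b t x z = 0 :=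
  if_neg (mt abs_sub_lt_and_lt_add_iff.1 hz)

theorem mul_eq_mul_sqRatio (hx : 0 < x) (ht : 0 < t) (z : ℝ) :
    (t ^ 2 - (x - z) ^ 2) * ((x + z) ^ 2 - t ^ 2) = (4 * x * t) ^ 2 *
      (sqRatio |x - t| (x + t) z * (1 - sqRatio |x - t| (x + t) z)) := by
  rw [sqRatio, sq_add_sub_sq_abs_sub, sq_abs]
  field_simp
  ring

theorem rpow_kernel_factor_eq (hx : 0 < x) (ht : 0 < t) (hz : 0 < z) :
    (x * z) ^ (-(2 * a) - b) * t ^ (-(2 * a) - 2 * b) * ((4 * x * t) ^ 2) ^ (a + b - 1 / 2) *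
        z ^ (2 * a + 1) =
      x ^ b * (4 ^ (2 * (a + b)) / 2) * (2 * z / (4 * x * t)) * z ^ (-b) := by
  have collect_x : x ^ (-(2 * a) - b) * x ^ (2 * (a + b - 1 / 2)) = x ^ b / x := by
    rw [← Real.rpow_add hx, ← Real.rpow_sub_one hx.ne']
    ring_nf
  have collect_t : t ^ (-(2 * a) - 2 * b) * t ^ (2 * (a + b - 1 / 2)) = t⁻¹ := by
    rw [← Real.rpow_add ht, ← Real.rpow_neg_one]
    ring_nf
  have collect_z : z ^ (-(2 * a) - b) * z ^ (2 * a + 1) = z ^ (-b) * z := by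
    rw [← Real.rpow_add hz, ← Real.rpow_add_one hz.ne']
    ring_nf
  have collect_four : (4 : ℝ) ^ (2 * (a + b - 1 / 2)) = 4 ^ (2 * (a + b)) / 4 := by
    rw [← Real.rpow_sub_one (by norm_num)]
    ring_nf
  calc (x * z) ^ (-(2 * a) - b) * t ^ (-(2 * a) - 2 * b) *
        ((4 * x * t) ^ 2) ^ (a + b - 1 / 2) * z ^ (2 * a + 1)
      = (x ^ (-(2 * a) - b) * x ^ (2 * (a + b - 1 / 2))) *
          (t ^ (-(2 * a) - 2 * b) * t ^ (2 * (a + b - 1 / 2))) *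
          (z ^ (-(2 * a) - b) * z ^ (2 * a + 1)) * 4 ^ (2 * (a + b - 1 / 2)) := by
        rw [← Real.rpow_natCast_mul (by positivity), Real.mul_rpow (by positivity) ht.le,
          Real.mul_rpow (by norm_num) hx.le, Real.mul_rpow hx.le hz.le]
        push_cast
        ring
    _ = x ^ b * (4 ^ (2 * (a + b)) / 2) * (2 * z / (4 * x * t)) * z ^ (-b) := by
        rw [collect_x, collect_t, collect_z, collect_four]
        field_simp

theorem PsiE_mul_rpow_eq (hx : 0 < x) (ht : 0 < t) (hz : z ∈ Ioo |x - t| (x + t)) :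
    PsiE a b t x z * z ^ (2 * a + 1) =
      x ^ b * (4 ^ (2 * (a + b)) / 2) * (2 * z / ((x + t) ^ 2 - |x - t| ^ 2)) * z ^ (-b) *
        (sqRatio |x - t| (x + t) z ^ (a + b - 1 / 2) *
          (1 - sqRatio |x - t| (x + t) z) ^ (a + b - 1 / 2)) := by
  have hz0 : 0 < z := (abs_nonneg _).trans_lt hz.1
  obtain ⟨hσ0, hσ1⟩ := sqRatio_mem_Ioo (abs_nonneg _) hz
  have hσ1' : 0 ≤ 1 - sqRatio |x - t| (x + t) z := sub_nonneg.2 hσ1.le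
  rw [PsiE, if_pos (abs_sub_lt_and_lt_add_iff.2 hz), mul_eq_mul_sqRatio hx ht,
    Real.mul_rpow (sq_nonneg _) (by positivity), Real.mul_rpow hσ0.le hσ1',
    sq_add_sub_sq_abs_sub, ← rpow_kernel_factor_eq hx ht hz0]
  ring

theorem lintegral_PsiE_eq (hx : 0 < x) (ht : 0 < t) (f : ℝ → ℝ) :
    ∫⁻ z in Ioi (0 : ℝ), ENNReal.ofReal (PsiE a b t x z * f z * z ^ (2 * a + 1)) =
      ENNReal.ofReal (x ^ b * (4 ^ (2 * (a + b)) / 2)) *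
        ∫⁻ z, ENNReal.ofReal (z ^ (-b) * f z) *
          ENNReal.ofReal (sqRatio |x - t| (x + t) z ^ (a + b - 1 / 2) *
            (1 - sqRatio |x - t| (x + t) z) ^ (a + b - 1 / 2)) ∂annulusMeasure |x - t| (x + t) := by
  have Ioo_subset : Ioo |x - t| (x + t) ⊆ Ioi 0 := fun z hz => (abs_nonneg _).trans_lt hz.1
  have support_subset :
      (fun z => ENNReal.ofReal (PsiE a b t x z * f z * z ^ (2 * a + 1))).support ⊆
        Ioo |x - t| (x + t) :=
    Function.support_subset_iff'.2 fun z hz => by simp [PsiE_of_notMem hz]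
  rw [setLIntegral_eq_of_support_subset (support_subset.trans Ioo_subset),
    ← setLIntegral_eq_of_support_subset support_subset, lintegral_annulusMeasure,
    ← lintegral_const_mul' _ _ ENNReal.ofReal_ne_top]
  refine setLIntegral_congr_fun measurableSet_Ioo fun z hz => ?_
  have hz0 : 0 < z := Ioo_subset hz
  obtain ⟨hσ0, hσ1⟩ := sqRatio_mem_Ioo (abs_nonneg _) hz
  have weight_nonneg : 0 ≤ sqRatio |x - t| (x + t) z ^ (a + b - 1 / 2) *
      (1 - sqRatio |x - t| (x + t) z) ^ (a + b - 1 / 2) :=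
    mul_nonneg (Real.rpow_nonneg hσ0.le _) (Real.rpow_nonneg (sub_nonneg.2 hσ1.le) _)
  have hL : 0 ≤ (x + t) ^ 2 - |x - t| ^ 2 := by rw [sq_add_sub_sq_abs_sub]; positivity
  rw [mul_comm (ENNReal.ofReal (z ^ (-b) * f z)), ← ENNReal.ofReal_mul weight_nonneg,
    ← ENNReal.ofReal_mul (by positivity), ← ENNReal.ofReal_mul (by positivity),
    mul_right_comm, PsiE_mul_rpow_eq hx ht hz]
  ring_nf

/-- The constant of the bound by `Dop` and `Rop` produced by Hölder's inequality with conjugate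
exponents `p` and `q`. Its factors are the constant of `PsiE_mul_rpow_eq`, the `L^q` norm of the
weight, and the comparison constant `3` of
`lintegral_annulusMeasure_abs_sub_add_le_Dop_add_Rop`. -/
noncomputable def psiConst (a b p q : ℝ) : ℝ≥0 :=
  (4 ^ (2 * (a + b)) / 2 : ℝ).toNNReal * (ProbabilityTheory.beta ((a + b - 1 / 2) * q + 1)
    ((a + b - 1 / 2) * q + 1)).toNNReal ^ (1 / q) * 3 ^ (1 / p)

theorem coe_psiConst {p q : ℝ} (hp : 0 ≤ p) (hq : 0 ≤ q) :
    (psiConst a b p q : ℝ≥0∞) = ENNReal.ofReal (4 ^ (2 * (a + b)) / 2) *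
      ENNReal.ofReal (ProbabilityTheory.beta ((a + b - 1 / 2) * q + 1)
        ((a + b - 1 / 2) * q + 1)) ^ (1 / q) * 3 ^ (1 / p) := by
  simp only [psiConst, ENNReal.coe_mul, ENNReal.coe_rpow_of_nonneg _ (one_div_nonneg.2 hp),
    ENNReal.coe_rpow_of_nonneg _ (one_div_nonneg.2 hq), ENNReal.coe_ofNat, ENNReal.ofReal]

theorem lintegral_PsiE_le_Dop_add_Rop {p q : ℝ} (hpq : p.HolderConjugate q)
    (hq : -1 < (a + b - 1 / 2) * q) {f : ℝ → ℝ} (hf : Measurable f) (hf0 : ∀ z, 0 ≤ f z)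
    (hx : 0 < x) (ht : 0 < t) :
    ∫⁻ z in Ioi (0 : ℝ), ENNReal.ofReal (PsiE a b t x z * f z * z ^ (2 * a + 1)) ≤
      psiConst a b p q *
        (ENNReal.ofReal (x ^ b) * Dop (fun z => (z ^ (-b) * f z) ^ p) x ^ (1 / p) +
          ENNReal.ofReal (x ^ b) * Rop (fun z => (z ^ (-b) * f z) ^ p) x ^ (1 / p)) := by
  set D := Dop (fun z => (z ^ (-b) * f z) ^ p) x
  set R := Rop (fun z => (z ^ (-b) * f z) ^ p) x
  have mean_le : ∫⁻ z, ENNReal.ofReal (z ^ (-b) * f z) ^ p ∂annulusMeasure |x - t| (x + t) ≤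
      3 * (D + R) := by
    refine le_of_eq_of_le (lintegral_annulusMeasure_congr fun z hz => ?_)
      (lintegral_annulusMeasure_abs_sub_add_le_Dop_add_Rop hx ht _)
    have hg : 0 ≤ z ^ (-b) * f z :=
      mul_nonneg (Real.rpow_nonneg ((abs_nonneg _).trans hz.1.le) _) (hf0 z)
    simp only [ENNReal.ofReal_rpow_of_nonneg hg hpq.nonneg, abs_of_nonneg (Real.rpow_nonneg hg p)]
  have hp : 0 ≤ 1 / p := hpq.one_div_nonneg
  have hp1 : 1 / p ≤ 1 := (div_le_one₀ hpq.pos).2 hpq.lt.le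
  have hAB : |x - t| < x + t := abs_lt.2 ⟨by linarith, by linarith⟩
  rw [lintegral_PsiE_eq hx ht]
  grw [lintegral_mul_sqRatio_rpow_le (abs_nonneg _) hAB hpq hq hq (by fun_prop), mean_le,
    ENNReal.mul_rpow_of_nonneg _ _ hp, ENNReal.rpow_add_le_add_rpow _ _ hp hp1]
  rw [coe_psiConst hpq.nonneg hpq.symm.nonneg, ENNReal.ofReal_mul (by positivity)]
  exact le_of_eq (by ring)

end Kernel

theorem PsiStarE_controlled_general (a b θ : ℝ) (hθ : 0 < θ) (hθ2 : 1 / (1 + θ) < a + b + 1 / 2) :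
    ∃ C : ℝ≥0, ∀ f : ℝ → ℝ, Measurable f → (∀ z, 0 ≤ f z) → ∀ x : ℝ, 0 < x →
      PsiStarE a b f x ≤
        C * (ENNReal.ofReal (x ^ b) *
            (Dop (fun z => (z ^ (-b) * f z) ^ (1 + θ)) x) ^ (1 / (1 + θ)) +
          ENNReal.ofReal (x ^ b) *
            (Rop (fun z => (z ^ (-b) * f z) ^ (1 + θ)) x) ^ (1 / (1 + θ))) := by
  have hpq := Real.HolderConjugate.conjExponent (show 1 < 1 + θ by linarith)
  set q := Real.conjExponent (1 + θ)
  have inv_q : 1 / q = 1 - 1 / (1 + θ) := by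
    rw [one_div, one_div]
    linarith [hpq.inv_add_inv_eq_one]
  have weight_integrable : -1 < (a + b - 1 / 2) * q := by
    rw [← div_lt_iff₀ hpq.symm.pos, neg_div, inv_q]
    linarith
  exact ⟨psiConst a b (1 + θ) q, fun f hf hf0 x hx => iSup₂_le fun t ht =>
    lintegral_PsiE_le_Dop_add_Rop hpq weight_integrable hf hf0 hx ht⟩

/-- control of Ψ_{*,E} by the special operators. -/
theorem PsiStarE_controlled (a b θ : ℝ) (ha : -1 < a) (hab1 : -(1/2) < a + b)
    (hab2 : a + b < 1/2) (hθ : 0 < θ) (hθ2 : 1/(1 + θ) < a + b + 1/2) :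
    ∃ C : ℝ≥0, ∀ f : ℝ → ℝ, Measurable f → (∀ z, 0 ≤ f z) → ∀ x : ℝ, 0 < x →
      PsiStarE a b f x ≤
        C * (ENNReal.ofReal (x ^ b) *
            (Dop (fun z => (z ^ (-b) * f z) ^ (1 + θ)) x) ^ (1/(1 + θ)) +
          ENNReal.ofReal (x ^ b) *
            (Rop (fun z => (z ^ (-b) * f z) ^ (1 + θ)) x) ^ (1/(1 + θ))) :=
  PsiStarE_controlled_general a b θ hθ hθ2
end

section
/- Let α > −1 and −1/2 < α + β < 1/2, and let θ > 0 satisfy 1/(1+θ) < α + β + 1/2. There is a constant C = C(α,β,θ) such that for every measurable f ≥ 0 on (0,∞) and every x > 0: Ψ^{α,β}_{*,F} f(x) ≤ C ( χ_{{β ≥ 1}} [H_{(α+1/2+1−β)(1+θ)+1}(f^{1+θ})(2x)]^{1/(1+θ)} + χ_{{β < 1}} [H_{(α+1/2)(1+θ)+1}(f^{1+θ})(2x)]^{1/(1+θ)} + N_{2α+2} f(x) + [T_{(α+1/2)(1+θ)}(f^{1+θ})(x)]^{1/(1+θ)} ). -/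
open MeasureTheory Set Filter
open scoped ENNReal NNReal

noncomputable def PsiF (a b t x z : ℝ) : ℝ :=
  if x + z < t then
    t ^ (-(2*a) - 2*b) * (t ^ 2 - (x - z) ^ 2) ^ (-a - 1/2) *
      (t ^ 2 - (x + z) ^ 2) ^ (a + b - 1/2)
  else 0

noncomputable def PsiStarF (a b : ℝ) (f : ℝ → ℝ) (x : ℝ) : ℝ≥0∞ :=
  ⨆ t ∈ Set.Ioi (0 : ℝ),
    ∫⁻ z in Set.Ioi (0 : ℝ), ENNReal.ofReal (PsiF a b t x z * f z * z ^ (2 * a + 1))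

noncomputable def Hop (η : ℝ) (f : ℝ → ℝ) (x : ℝ) : ℝ≥0∞ :=
  ENNReal.ofReal (x ^ (-η)) * ∫⁻ z in Set.Ioo (0 : ℝ) x, ENNReal.ofReal (z ^ (η - 1) * f z)

noncomputable def Nop (η : ℝ) (f : ℝ → ℝ) (x : ℝ) : ℝ≥0∞ :=
  ⨆ t ∈ Set.Ioi x,
    ENNReal.ofReal (t ^ (-η)) * ∫⁻ z in Set.Ioo (0 : ℝ) t, ENNReal.ofReal (z ^ (η - 1) * |f z|)

noncomputable def Tmax (η : ℝ) (f : ℝ → ℝ) (x : ℝ) : ℝ≥0∞ :=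
  ⨆ t ∈ Set.Ioi (2 * x),
    ∫⁻ z in Set.Ioo (t / 2) t, ENNReal.ofReal (z ^ (η - 1) * |f z| * (t - z + x) ^ (-η))

open ProbabilityTheory

/-!
On `x + z < t` the kernel is a product of powers of `t`, `t - x + z`, `t + x - z`, `t - x - z` and
`t + x + z`. Write `p = 1 + θ`.

* If `t ≤ 3 * x`, all these factors except `t - x + z` and `t - x - z` are comparable to `x`, and
  `t - x + z` is comparable to `t - x`. Hölder's inequality applied to `z ^ γ * f z` leaves a beta
  integral on `(0, t - x)` and produces the Hardy term. The exponent `γ` must keep that integral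
  finite at `0` and leave a nonnegative power of `t - x ≤ 2 * x`; this forces different
  values of `γ` for `b < 1` and `1 ≤ b`.
* If `t > 3 * x` and `z ≤ t / 2`, all factors are comparable to `t`, which gives the `Nop` term.
* If `t > 3 * x` and `z > t / 2`, only `t + x - z` and `t - x - z` are not comparable to `t`.
  Hölder's inequality absorbs the latter and leaves the `Tmax` term.

The condition `1 / p < a + b + 1 / 2` says that the conjugate power of
`(t - x - z) ^ (a + b - 1 / 2)` is integrable up to `z = t - x`.
-/

lemma rpow_le_rpow_abs_mul_rpow {c u y : ℝ} (r : ℝ) (hc : 0 < c) (hy : 0 < y)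
    (hyu : y ≤ c * u) (huy : u ≤ c * y) : u ^ r ≤ c ^ |r| * y ^ r := by
  have hu : 0 < u := pos_of_mul_pos_right (hy.trans_le hyu) hc.le
  rcases le_total 0 r with hr | hr
  · rw [abs_of_nonneg hr, ← Real.mul_rpow hc.le hy.le]
    exact Real.rpow_le_rpow hu.le huy hr
  · rw [abs_of_nonpos hr, Real.rpow_neg hc.le, ← div_eq_inv_mul, ← Real.div_rpow hy.le hc.le]
    exact Real.rpow_le_rpow_of_nonpos (by positivity) ((div_le_iff₀' hc).2 hyu) hr

lemma rpow_neg_mul_rpow_sub_le {d y m σ : ℝ} (hd : 0 < d) (hdy : d ≤ y) (hσ : σ ≤ m) :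
    y ^ (-m) * d ^ (m - σ) ≤ y ^ (-σ) := by
  have hy : 0 < y := hd.trans_le hdy
  grw [Real.rpow_le_rpow hd.le hdy (sub_nonneg.2 hσ), ← Real.rpow_add hy]
  exact le_of_eq (by ring_nf)

lemma setLIntegral_sub_rpow_mul_rpow {A B d : ℝ} (hA : -1 < A) (hB : -1 < B) (hd : 0 < d) :
    ∫⁻ z in Ioo 0 d, ENNReal.ofReal ((d - z) ^ A * z ^ B) =
      ENNReal.ofReal (d ^ (A + B + 1) * beta (B + 1) (A + 1)) := by
  have hbeta : 0 < beta (B + 1) (A + 1) := beta_pos (by linarith) (by linarith)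
  have himage : (fun u => d * u) '' Ioo 0 1 = Ioo 0 d := by
    rw [image_mul_left_Ioo hd, mul_zero, mul_one]
  rw [← himage, lintegral_image_eq_lintegral_abs_deriv_mul measurableSet_Ioo
    (fun u _ => (hasDerivAt_const_mul d).hasDerivWithinAt) (mul_right_injective₀ hd.ne').injOn,
    ← mul_one (ENNReal.ofReal (_ * _)),
    ← lintegral_betaPDF_eq_one (by linarith : 0 < B + 1) (by linarith : 0 < A + 1),
    lintegral_betaPDF, ← lintegral_const_mul' _ _ ENNReal.ofReal_ne_top]
  refine setLIntegral_congr_fun measurableSet_Ioo fun u hu => ?_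
  have hu' : 0 ≤ 1 - u := by linarith [hu.2]
  simp only [abs_of_pos hd, add_sub_cancel_right]
  rw [← ENNReal.ofReal_mul hd.le, ← ENNReal.ofReal_mul (by positivity),
    show d - d * u = d * (1 - u) by ring, Real.mul_rpow hd.le hu', Real.mul_rpow hd.le hu.1.le,
    Real.rpow_add hd, Real.rpow_add hd, Real.rpow_one]
  congr 1
  field_simp

lemma exists_setLIntegral_sub_rpow_mul_rpow_mul_le {p A B : ℝ} (hp : 1 < p)
    (hA : 1 / p < A + 1) (hB : 1 / p < B + 1) :
    ∃ C : ℝ≥0, ∀ d : ℝ, 0 < d → ∀ S ⊆ Ioo 0 d, ∀ g : ℝ → ℝ≥0∞, Measurable g →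
      ∫⁻ z in S, ENNReal.ofReal ((d - z) ^ A * z ^ B) * g z ≤
        ENNReal.ofReal (C * d ^ (A + B + 1 - 1 / p)) * (∫⁻ z in S, g z ^ p) ^ (1 / p) := by
  have hpq := Real.HolderConjugate.conjExponent hp
  set q := p.conjExponent
  have hq : 0 < q := hpq.symm.pos
  have hqp : 1 / q = 1 - 1 / p := by simpa only [one_div] using hpq.one_sub_inv.symm
  have exponent_gt {r : ℝ} (hr : 1 / p < r + 1) : -1 < r * q := by
    rw [← div_lt_iff₀ hq, neg_div, hqp]
    linarith
  have hbeta : 0 < beta (B * q + 1) (A * q + 1) :=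
    beta_pos (by linarith [exponent_gt hB]) (by linarith [exponent_gt hA])
  refine ⟨⟨beta (B * q + 1) (A * q + 1) ^ (1 / q), by positivity⟩, fun d hd S hS g hg => ?_⟩
  have hweight : ∫⁻ z in S, ENNReal.ofReal ((d - z) ^ A * z ^ B) ^ q ≤
      ENNReal.ofReal (d ^ (A * q + B * q + 1) * beta (B * q + 1) (A * q + 1)) := by
    rw [← setLIntegral_sub_rpow_mul_rpow (exponent_gt hA) (exponent_gt hB) hd]
    refine (lintegral_mono_set hS).trans_eq <|
      setLIntegral_congr_fun measurableSet_Ioo fun z hz => ?_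
    have hz0 : 0 ≤ z := hz.1.le
    have hdz : 0 ≤ d - z := by linarith [hz.2]
    rw [ENNReal.ofReal_rpow_of_nonneg (by positivity) hq.le, Real.mul_rpow (by positivity)
      (by positivity), ← Real.rpow_mul hdz, ← Real.rpow_mul hz0]
  calc ∫⁻ z in S, ENNReal.ofReal ((d - z) ^ A * z ^ B) * g z
      ≤ (∫⁻ z in S, ENNReal.ofReal ((d - z) ^ A * z ^ B) ^ q) ^ (1 / q) *
          (∫⁻ z in S, g z ^ p) ^ (1 / p) :=
        ENNReal.lintegral_mul_le_Lp_mul_Lq _ hpq.symm (by fun_prop) hg.aemeasurable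
    _ ≤ ENNReal.ofReal (d ^ (A * q + B * q + 1) * beta (B * q + 1) (A * q + 1)) ^ (1 / q) *
          (∫⁻ z in S, g z ^ p) ^ (1 / p) := by gcongr
    _ = _ := by
        have hexp : (A * q + B * q + 1) * (1 / q) = A + B + 1 - 1 / p := by
          rw [add_sub_assoc, ← hqp]
          field_simp
        rw [ENNReal.ofReal_rpow_of_nonneg (by positivity) (by positivity),
          Real.mul_rpow (by positivity) hbeta.le, ← Real.rpow_mul hd.le, hexp, mul_comm (d ^ _)]
        rfl

lemma exists_setLIntegral_ofReal_le_of_le_sub_rpow_mul_rpow {p A B : ℝ} (hp : 1 < p)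
    (hA : 1 / p < A + 1) (hB : 1 / p < B + 1) :
    ∃ C : ℝ≥0, ∀ d : ℝ, 0 < d → ∀ S ⊆ Ioo 0 d, MeasurableSet S →
      ∀ (κ : ℝ) (h F : ℝ → ℝ), 0 ≤ κ → Measurable F →
      (∀ z ∈ S, h z ≤ κ * ((d - z) ^ A * z ^ B * F z)) →
      ∫⁻ z in S, ENNReal.ofReal (h z) ≤ ENNReal.ofReal (C * (κ * d ^ (A + B + 1 - 1 / p))) *
        (∫⁻ z in S, ENNReal.ofReal (F z) ^ p) ^ (1 / p) := by
  obtain ⟨C, hC⟩ := exists_setLIntegral_sub_rpow_mul_rpow_mul_le hp hA hB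
  refine ⟨C, fun d hd S hS hSm κ h F hκ hF hh => ?_⟩
  calc ∫⁻ z in S, ENNReal.ofReal (h z)
      ≤ ∫⁻ z in S, ENNReal.ofReal κ *
          (ENNReal.ofReal ((d - z) ^ A * z ^ B) * ENNReal.ofReal (F z)) :=
        setLIntegral_mono' hSm fun z hz => by
          have hz0 : 0 ≤ z := (hS hz).1.le
          have hdz : 0 ≤ d - z := sub_nonneg.2 (hS hz).2.le
          rw [← ENNReal.ofReal_mul (by positivity), ← ENNReal.ofReal_mul hκ]
          exact ENNReal.ofReal_le_ofReal (hh z hz)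
    _ ≤ ENNReal.ofReal κ * (ENNReal.ofReal (C * d ^ (A + B + 1 - 1 / p)) *
          (∫⁻ z in S, ENNReal.ofReal (F z) ^ p) ^ (1 / p)) := by
        rw [lintegral_const_mul' _ _ ENNReal.ofReal_ne_top]
        grw [hC d hd S hS _ hF.ennreal_ofReal]
    _ = _ := by rw [← mul_assoc, ← ENNReal.ofReal_mul hκ, mul_left_comm]

lemma PsiF_of_add_lt {a b t x z : ℝ} (hx : 0 ≤ x) (hz : 0 ≤ z) (h : x + z < t) :
    PsiF a b t x z =
      t ^ (-(2 * a) - 2 * b) * ((t - x + z) ^ (-a - 1 / 2) * (t + x - z) ^ (-a - 1 / 2)) *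
        ((t - x - z) ^ (a + b - 1 / 2) * (t + x + z) ^ (a + b - 1 / 2)) := by
  rw [PsiF, if_pos h, ← Real.mul_rpow (by linarith) (by linarith),
    ← Real.mul_rpow (by linarith) (by linarith)]
  congr 3 <;> ring

lemma exists_PsiF_le_of_le_three_mul (a b : ℝ) :
    ∃ C : ℝ≥0, ∀ t x z : ℝ, 0 < x → 0 < z → x + z < t → t ≤ 3 * x →
      PsiF a b t x z ≤ C * ((2 * x) ^ (-(2 * a + b + 1)) * (t - x) ^ (-a - 1 / 2)) *
        (t - x - z) ^ (a + b - 1 / 2) := by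
  refine ⟨8 ^ |-(2 * a) - 2 * b| * (8 ^ |-a - 1 / 2| * 8 ^ |-a - 1 / 2|) * 8 ^ |a + b - 1 / 2|,
    fun t x z hx hz hxzt ht => ?_⟩
  have htpos : 0 < t := by linarith
  have htx : 0 < t - x := by linarith
  have htxz : 0 < t - x - z := by linarith
  have hadd_sub_pos : 0 < t + x - z := by linarith
  have ht_le : t ^ (-(2 * a) - 2 * b) ≤
      8 ^ |-(2 * a) - 2 * b| * (2 * x) ^ (-(2 * a) - 2 * b) :=
    rpow_le_rpow_abs_mul_rpow _ (by simp) (by positivity) (by linarith) (by linarith)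
  have hsub_add : (t - x + z) ^ (-a - 1 / 2) ≤ 8 ^ |-a - 1 / 2| * (t - x) ^ (-a - 1 / 2) :=
    rpow_le_rpow_abs_mul_rpow _ (by simp) htx (by linarith) (by linarith)
  have hadd_sub : (t + x - z) ^ (-a - 1 / 2) ≤ 8 ^ |-a - 1 / 2| * (2 * x) ^ (-a - 1 / 2) :=
    rpow_le_rpow_abs_mul_rpow _ (by simp) (by positivity) (by linarith) (by linarith)
  have hadd_add : (t + x + z) ^ (a + b - 1 / 2) ≤ 8 ^ |a + b - 1 / 2| * (2 * x) ^ (a + b - 1 / 2) :=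
    rpow_le_rpow_abs_mul_rpow _ (by simp) (by positivity) (by linarith) (by linarith)
  have hexp : (2 * x) ^ (-(2 * a + b + 1)) = (2 * x) ^ (-(2 * a) - 2 * b) *
      (2 * x) ^ (-a - 1 / 2) * (2 * x) ^ (a + b - 1 / 2) := by
    simp only [← Real.rpow_add (by positivity : 0 < 2 * x)]
    ring_nf
  rw [PsiF_of_add_lt hx.le hz.le hxzt, hexp]
  grw [ht_le, hsub_add, hadd_sub, hadd_add]
  exact le_of_eq (by push_cast; ring)

lemma exists_PsiF_le_of_le_half (a b : ℝ) :
    ∃ C : ℝ≥0, ∀ t x z : ℝ, 0 < x → 3 * x ≤ t → 0 < z → z ≤ t / 2 →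
      PsiF a b t x z ≤ C * t ^ (-(2 * a + 2)) := by
  refine ⟨8 ^ |-a - 1 / 2| * 8 ^ |-a - 1 / 2| * (8 ^ |a + b - 1 / 2| * 8 ^ |a + b - 1 / 2|),
    fun t x z hx hxt hz hzt => ?_⟩
  have ht : 0 < t := by linarith
  have htxz : 0 < t - x - z := by linarith
  have hadd_sub_pos : 0 < t + x - z := by linarith
  have rpow_le {u : ℝ} (r : ℝ) (htu : t ≤ 8 * u) (hut : u ≤ 8 * t) : u ^ r ≤ 8 ^ |r| * t ^ r :=
    rpow_le_rpow_abs_mul_rpow r (by simp) ht htu hut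
  have hexp : t ^ (-(2 * a + 2)) = t ^ (-(2 * a) - 2 * b) * (t ^ (-a - 1 / 2) * t ^ (-a - 1 / 2)) *
      (t ^ (a + b - 1 / 2) * t ^ (a + b - 1 / 2)) := by
    simp only [← Real.rpow_add ht]
    ring_nf
  rw [PsiF_of_add_lt hx.le hz.le (by linarith), hexp]
  grw [rpow_le (u := t - x + z) _ (by linarith) (by linarith),
    rpow_le (u := t + x - z) _ (by linarith) (by linarith),
    rpow_le (u := t - x - z) _ (by linarith) (by linarith),
    rpow_le (u := t + x + z) _ (by linarith) (by linarith)]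
  exact le_of_eq (by push_cast; ring)

lemma exists_PsiF_mul_rpow_le_of_half_lt (a b δ : ℝ) :
    ∃ C : ℝ≥0, ∀ t x z : ℝ, 0 < x → t / 2 < z → x + z < t →
      PsiF a b t x z * z ^ (2 * a + 1) ≤ C * t ^ (-(b + δ)) *
        ((t - x - z) ^ (a + b - 1 / 2) * (z ^ δ * (t - z + x) ^ (-(a + 1 / 2)))) := by
  refine ⟨8 ^ |-a - 1 / 2| * 8 ^ |a + b - 1 / 2| * 8 ^ |2 * a + 1 - δ|, fun t x z hx htz hxzt => ?_⟩
  have ht : 0 < t := by linarith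
  have hz : 0 < z := by linarith
  have htxz : 0 < t - x - z := by linarith
  have hadd_sub_pos : 0 < t + x - z := by linarith
  have rpow_le {u : ℝ} (r : ℝ) (htu : t ≤ 8 * u) (hut : u ≤ 8 * t) : u ^ r ≤ 8 ^ |r| * t ^ r :=
    rpow_le_rpow_abs_mul_rpow r (by simp) ht htu hut
  have hexp : t ^ (-(b + δ)) = t ^ (-(2 * a) - 2 * b) * t ^ (-a - 1 / 2) * t ^ (a + b - 1 / 2) *
      t ^ (2 * a + 1 - δ) := by
    simp only [← Real.rpow_add ht]
    ring_nf
  have hz_split : z ^ (2 * a + 1) = z ^ (2 * a + 1 - δ) * z ^ δ := by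
    rw [← Real.rpow_add hz, sub_add_cancel]
  rw [PsiF_of_add_lt hx.le hz.le hxzt, hexp, hz_split, show t - z + x = t + x - z by ring, neg_add']
  grw [rpow_le (u := t - x + z) _ (by linarith) (by linarith),
    rpow_le (u := t + x + z) _ (by linarith) (by linarith),
    rpow_le (u := z) _ (by linarith) (by linarith)]
  exact le_of_eq (by push_cast; ring)

lemma Hop_rpow_one_div {p γ y : ℝ} {f : ℝ → ℝ} (hp : 0 < p) (hy : 0 < y) (hf : ∀ z, 0 ≤ f z) :
    Hop (γ * p + 1) (fun z => f z ^ p) y ^ (1 / p) =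
      ENNReal.ofReal (y ^ (-(γ + 1 / p))) *
        (∫⁻ z in Ioo 0 y, ENNReal.ofReal (z ^ γ * f z) ^ p) ^ (1 / p) := by
  have hweight : ∫⁻ z in Ioo 0 y, ENNReal.ofReal (z ^ (γ * p + 1 - 1) * f z ^ p) =
      ∫⁻ z in Ioo 0 y, ENNReal.ofReal (z ^ γ * f z) ^ p :=
    setLIntegral_congr_fun measurableSet_Ioo fun z hz => by
      have hz0 : 0 ≤ z := hz.1.le
      rw [add_sub_cancel_right, Real.rpow_mul hz0, ← Real.mul_rpow (by positivity) (hf z),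
        ENNReal.ofReal_rpow_of_nonneg (mul_nonneg (by positivity) (hf z)) hp.le]
  have hexp : -(γ * p + 1) * (1 / p) = -(γ + 1 / p) := by field_simp
  rw [Hop, hweight, ENNReal.mul_rpow_of_nonneg _ _ (by positivity),
    ENNReal.ofReal_rpow_of_nonneg (by positivity) (by positivity), ← Real.rpow_mul hy.le, hexp]

lemma setLIntegral_rpow_le_Tmax {p η t x : ℝ} {f : ℝ → ℝ} (hp : 0 < p) (hx : 0 < x)
    (hxt : 2 * x < t) (hf : ∀ z, 0 ≤ f z) :
    ∫⁻ z in Ioo (t / 2) t, ENNReal.ofReal (z ^ (η - 1 / p) * f z * (t - z + x) ^ (-η)) ^ p ≤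
      Tmax (η * p) (fun z => f z ^ p) x := by
  refine (setLIntegral_congr_fun measurableSet_Ioo fun z hz => ?_).trans_le
    (le_iSup₂_of_le t hxt le_rfl)
  have hz0 : 0 ≤ z := by linarith [hz.1]
  have htz : 0 ≤ t - z + x := by linarith [hz.2]
  have hfz := hf z
  rw [ENNReal.ofReal_rpow_of_nonneg (by positivity) hp.le, Real.mul_rpow (by positivity)
    (by positivity), Real.mul_rpow (by positivity) hfz, ← Real.rpow_mul hz0, ← Real.rpow_mul htz,
    abs_of_nonneg (by positivity), sub_mul, one_div_mul_cancel hp.ne', neg_mul]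

lemma setLIntegral_Ioi_PsiF_eq_Ioo (a b : ℝ) (f : ℝ → ℝ) (t x : ℝ) :
    ∫⁻ z in Ioi 0, ENNReal.ofReal (PsiF a b t x z * f z * z ^ (2 * a + 1)) =
      ∫⁻ z in Ioo 0 (t - x), ENNReal.ofReal (PsiF a b t x z * f z * z ^ (2 * a + 1)) := by
  rw [← Iio_inter_Ioi, ← Measure.restrict_restrict measurableSet_Iio]
  refine (setLIntegral_eq_of_support_subset fun z hz => ?_).symm
  contrapose! hz
  have hxz : ¬ x + z < t := by linarith [notMem_Iio.1 hz]
  simp [PsiF, hxz]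

lemma exists_setLIntegral_PsiF_le_Hop {a b p γ : ℝ} (hp : 1 < p) (hab : 1 / p < a + b + 1 / 2)
    (hγ : γ + 1 / p < 2 * a + 2) (hγb : γ + 1 / p ≤ 2 * a + b + 1) :
    ∃ C : ℝ≥0, ∀ f : ℝ → ℝ, Measurable f → (∀ z, 0 ≤ f z) → ∀ t x : ℝ, 0 < x → t ≤ 3 * x →
      ∫⁻ z in Ioo 0 (t - x), ENNReal.ofReal (PsiF a b t x z * f z * z ^ (2 * a + 1)) ≤
        C * Hop (γ * p + 1) (fun z => f z ^ p) (2 * x) ^ (1 / p) := by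
  obtain ⟨C, hC⟩ := exists_PsiF_le_of_le_three_mul a b
  obtain ⟨K, hK⟩ := exists_setLIntegral_ofReal_le_of_le_sub_rpow_mul_rpow (A := a + b - 1 / 2)
    (B := 2 * a + 1 - γ) hp (by linarith) (by linarith)
  refine ⟨K * C, fun f hf hf0 t x hx ht => ?_⟩
  rcases le_or_gt t x with htx | hxt
  · simp [Ioo_eq_empty (by linarith : ¬ 0 < t - x)]
  have hd : 0 < t - x := by linarith
  have hkernel : ∀ z ∈ Ioo 0 (t - x), PsiF a b t x z * f z * z ^ (2 * a + 1) ≤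
      C * ((2 * x) ^ (-(2 * a + b + 1)) * (t - x) ^ (-a - 1 / 2)) *
        ((t - x - z) ^ (a + b - 1 / 2) * z ^ (2 * a + 1 - γ) * (z ^ γ * f z)) := by
    intro z ⟨hz, hzt⟩
    have hfz := hf0 z
    rw [show z ^ (2 * a + 1) = z ^ (2 * a + 1 - γ) * z ^ γ by
      rw [← Real.rpow_add hz, sub_add_cancel]]
    grw [hC t x z hx hz (by linarith) ht]
    exact le_of_eq (by ring)
  have hscale : C * ((2 * x) ^ (-(2 * a + b + 1)) * (t - x) ^ (-a - 1 / 2)) *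
      (t - x) ^ (a + b - 1 / 2 + (2 * a + 1 - γ) + 1 - 1 / p) ≤ C * (2 * x) ^ (-(γ + 1 / p)) := by
    grw [← rpow_neg_mul_rpow_sub_le hd (by linarith : t - x ≤ 2 * x) hγb]
    rw [mul_assoc, mul_assoc, ← Real.rpow_add hd]
    exact le_of_eq (by ring_nf)
  calc _ ≤ ENNReal.ofReal (K * (C * (2 * x) ^ (-(γ + 1 / p)))) *
        (∫⁻ z in Ioo 0 (t - x), ENNReal.ofReal (z ^ γ * f z) ^ p) ^ (1 / p) := by
        grw [hK _ hd _ subset_rfl measurableSet_Ioo _ _ _ (by positivity) (by fun_prop) hkernel,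
          hscale]
    _ ≤ ENNReal.ofReal (K * (C * (2 * x) ^ (-(γ + 1 / p)))) *
        (∫⁻ z in Ioo 0 (2 * x), ENNReal.ofReal (z ^ γ * f z) ^ p) ^ (1 / p) := by
        grw [Ioo_subset_Ioo_right (by linarith : t - x ≤ 2 * x)]
    _ = _ := by
        rw [Hop_rpow_one_div (by linarith) (by positivity) hf0, ← mul_assoc, ← NNReal.coe_mul,
          ENNReal.ofReal_mul (by positivity), ENNReal.ofReal_coe_nnreal, mul_assoc]

lemma exists_setLIntegral_PsiF_le_Nop (a b : ℝ) :
    ∃ C : ℝ≥0, ∀ f : ℝ → ℝ, (∀ z, 0 ≤ f z) → ∀ t x : ℝ, 0 < x → 3 * x ≤ t →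
      ∫⁻ z in Ioc 0 (t / 2), ENNReal.ofReal (PsiF a b t x z * f z * z ^ (2 * a + 1)) ≤
        C * Nop (2 * a + 2) f x := by
  obtain ⟨C, hC⟩ := exists_PsiF_le_of_le_half a b
  refine ⟨C, fun f hf0 t x hx ht => ?_⟩
  have htpos : 0 < t := by linarith
  have hkernel : ∀ z ∈ Ioc 0 (t / 2),
      ENNReal.ofReal (PsiF a b t x z * f z * z ^ (2 * a + 1)) ≤
        ENNReal.ofReal (C * t ^ (-(2 * a + 2))) *
          ENNReal.ofReal (z ^ (2 * a + 2 - 1) * |f z|) := by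
    intro z ⟨hz, hzt⟩
    have hfz := hf0 z
    rw [← ENNReal.ofReal_mul (by positivity), abs_of_nonneg hfz,
      show 2 * a + 2 - 1 = 2 * a + 1 by ring]
    grw [hC t x z hx ht hz hzt]
    exact ENNReal.ofReal_le_ofReal (le_of_eq (by ring))
  calc _ ≤ ENNReal.ofReal (C * t ^ (-(2 * a + 2))) *
        ∫⁻ z in Ioc 0 (t / 2), ENNReal.ofReal (z ^ (2 * a + 2 - 1) * |f z|) := by
        rw [← lintegral_const_mul' _ _ ENNReal.ofReal_ne_top]
        exact setLIntegral_mono' measurableSet_Ioc hkernel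
    _ ≤ C * (ENNReal.ofReal (t ^ (-(2 * a + 2))) *
        ∫⁻ z in Ioo 0 t, ENNReal.ofReal (z ^ (2 * a + 2 - 1) * |f z|)) := by
        rw [ENNReal.ofReal_mul (by positivity), ENNReal.ofReal_coe_nnreal, mul_assoc]
        grw [Ioc_subset_Ioo_right (by linarith : t / 2 < t)]
    _ ≤ C * Nop (2 * a + 2) f x := by
        gcongr
        exact le_iSup₂_of_le t (by rw [mem_Ioi]; linarith) le_rfl

lemma exists_setLIntegral_PsiF_le_Tmax {a b p : ℝ} (hp : 1 < p) (hab : 1 / p < a + b + 1 / 2) :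
    ∃ C : ℝ≥0, ∀ f : ℝ → ℝ, Measurable f → (∀ z, 0 ≤ f z) → ∀ t x : ℝ, 0 < x → 2 * x < t →
      ∫⁻ z in Ioo (t / 2) (t - x), ENNReal.ofReal (PsiF a b t x z * f z * z ^ (2 * a + 1)) ≤
        C * Tmax ((a + 1 / 2) * p) (fun z => f z ^ p) x ^ (1 / p) := by
  obtain ⟨C, hC⟩ := exists_PsiF_mul_rpow_le_of_half_lt a b (a + 1 / 2 - 1 / p)
  obtain ⟨K, hK⟩ := exists_setLIntegral_ofReal_le_of_le_sub_rpow_mul_rpow (A := a + b - 1 / 2)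
    (B := 0) hp (by linarith) (by rw [zero_add, div_lt_one] <;> linarith)
  refine ⟨K * C, fun f hf hf0 t x hx ht => ?_⟩
  have hd : 0 < t - x := by linarith
  have htpos : 0 < t := by linarith
  have hkernel : ∀ z ∈ Ioo (t / 2) (t - x), PsiF a b t x z * f z * z ^ (2 * a + 1) ≤
      C * t ^ (-(b + (a + 1 / 2 - 1 / p))) * ((t - x - z) ^ (a + b - 1 / 2) * z ^ (0 : ℝ) *
        (z ^ (a + 1 / 2 - 1 / p) * f z * (t - z + x) ^ (-(a + 1 / 2)))) := by
    intro z ⟨htz, hzt⟩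
    have hfz := hf0 z
    rw [mul_right_comm, Real.rpow_zero, mul_one]
    grw [hC t x z hx htz (by linarith)]
    exact le_of_eq (by ring)
  have hscale : C * t ^ (-(b + (a + 1 / 2 - 1 / p))) * (t - x) ^ (a + b - 1 / 2 + 0 + 1 - 1 / p) ≤
      (C : ℝ) := by
    have hmono := rpow_neg_mul_rpow_sub_le hd (by linarith : t - x ≤ t)
      (by linarith : 0 ≤ b + (a + 1 / 2 - 1 / p))
    rw [neg_zero, Real.rpow_zero] at hmono
    rw [show a + b - 1 / 2 + 0 + 1 - 1 / p = b + (a + 1 / 2 - 1 / p) - 0 by ring, mul_assoc]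
    exact mul_le_of_le_one_right C.2 hmono
  calc _ ≤ ENNReal.ofReal (K * C) * (∫⁻ z in Ioo (t / 2) (t - x), ENNReal.ofReal
        (z ^ (a + 1 / 2 - 1 / p) * f z * (t - z + x) ^ (-(a + 1 / 2))) ^ p) ^ (1 / p) := by
        grw [hK _ hd _ (Ioo_subset_Ioo_left (by linarith)) measurableSet_Ioo _ _ _
          (by positivity) (by fun_prop) hkernel, hscale]
    _ ≤ ENNReal.ofReal (K * C) * Tmax ((a + 1 / 2) * p) (fun z => f z ^ p) x ^ (1 / p) := by
        grw [Ioo_subset_Ioo_right (by linarith : t - x ≤ t),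
          setLIntegral_rpow_le_Tmax (by linarith) hx ht hf0]
    _ = _ := by rw [← NNReal.coe_mul, ENNReal.ofReal_coe_nnreal]

theorem exists_PsiStarF_le_Hop_add_Nop_add_Tmax {a b p γ : ℝ} (hp : 1 < p)
    (hab : 1 / p < a + b + 1 / 2) (hγ : γ + 1 / p < 2 * a + 2) (hγb : γ + 1 / p ≤ 2 * a + b + 1) :
    ∃ C : ℝ≥0, ∀ f : ℝ → ℝ, Measurable f → (∀ z, 0 ≤ f z) → ∀ x : ℝ, 0 < x →
      PsiStarF a b f x ≤
        C * (Hop (γ * p + 1) (fun z => f z ^ p) (2 * x) ^ (1 / p) + Nop (2 * a + 2) f x +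
          Tmax ((a + 1 / 2) * p) (fun z => f z ^ p) x ^ (1 / p)) := by
  obtain ⟨C₁, hH⟩ := exists_setLIntegral_PsiF_le_Hop hp hab hγ hγb
  obtain ⟨C₂, hN⟩ := exists_setLIntegral_PsiF_le_Nop a b
  obtain ⟨C₃, hT⟩ := exists_setLIntegral_PsiF_le_Tmax hp hab
  refine ⟨C₁ + C₂ + C₃, fun f hf hf0 x hx => iSup₂_le fun t _ => ?_⟩
  rw [setLIntegral_Ioi_PsiF_eq_Ioo]
  rcases le_or_gt t (3 * x) with ht | ht
  · grw [hH f hf hf0 t x hx ht]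
    rw [add_assoc C₁, add_assoc]
    gcongr <;> exact le_self_add
  · rw [← Ioc_union_Ioo_eq_Ioo (by linarith : 0 ≤ t / 2) (by linarith : t / 2 < t - x)]
    grw [lintegral_union_le, hN f hf0 t x hx ht.le, hT f hf hf0 t x hx (by linarith)]
    rw [mul_add]
    gcongr
    · rw [add_right_comm]; exact le_add_self
    · exact le_add_self
    · exact le_add_self

theorem PsiStarF_controlled_general {a b θ : ℝ} (hθ : 0 < θ)
    (hab : 1 / (1 + θ) < a + b + 1 / 2) :
    ∃ C : ℝ≥0, ∀ f : ℝ → ℝ, Measurable f → (∀ z, 0 ≤ f z) → ∀ x : ℝ, 0 < x →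
      PsiStarF a b f x ≤
        C * ((if 1 ≤ b then
            (Hop ((a + 1 / 2 + 1 - b) * (1 + θ) + 1) (fun z => f z ^ (1 + θ)) (2 * x)) ^
              (1 / (1 + θ)) else 0) +
          (if b < 1 then
            (Hop ((a + 1 / 2) * (1 + θ) + 1) (fun z => f z ^ (1 + θ)) (2 * x)) ^
              (1 / (1 + θ)) else 0) +
          Nop (2 * a + 2) f x +
          (Tmax ((a + 1 / 2) * (1 + θ)) (fun z => f z ^ (1 + θ)) x) ^ (1 / (1 + θ))) := by
  rcases le_or_gt 1 b with hb | hb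
  · simpa only [if_pos hb, if_neg hb.not_gt, add_zero] using
      exists_PsiStarF_le_Hop_add_Nop_add_Tmax (γ := a + 1 / 2 + 1 - b) (by linarith) hab
        (by linarith) (by linarith)
  · simpa only [if_pos hb, if_neg hb.not_ge, zero_add] using
      exists_PsiStarF_le_Hop_add_Nop_add_Tmax (γ := a + 1 / 2) (by linarith) hab
        (by linarith) (by linarith)

/-- control of Ψ_{*,F} by the special operators. -/
theorem PsiStarF_controlled (a b θ : ℝ) (ha : -1 < a) (hab1 : -(1/2) < a + b)
    (hab2 : a + b < 1/2) (hθ : 0 < θ) (hθ2 : 1/(1 + θ) < a + b + 1/2) :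
    ∃ C : ℝ≥0, ∀ f : ℝ → ℝ, Measurable f → (∀ z, 0 ≤ f z) → ∀ x : ℝ, 0 < x →
      PsiStarF a b f x ≤
        C * ((if 1 ≤ b then
            (Hop ((a + 1/2 + 1 - b) * (1 + θ) + 1) (fun z => f z ^ (1 + θ)) (2*x)) ^
              (1/(1 + θ)) else 0) +
          (if b < 1 then
            (Hop ((a + 1/2) * (1 + θ) + 1) (fun z => f z ^ (1 + θ)) (2*x)) ^
              (1/(1 + θ)) else 0) +
          Nop (2*a + 2) f x +
          (Tmax ((a + 1/2) * (1 + θ)) (fun z => f z ^ (1 + θ)) x) ^ (1/(1 + θ))) :=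
  PsiStarF_controlled_general hθ hθ2
end
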